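/- Let G be a finite graph on vertex set V with η = |V| vertices; for v ∈ V let d(v) be its degree. Then Σ_{v∈V} C(d(v), 3) = β_⊣ + β̄_∧ + 2β̄₁ + 4β̄₀. -/

import Mathlib

/-!
The sum `∑ v, C(d(v), 3)` counts the pairs `(v, S)` with `S` a set of three neighbours of `v`.
Sending `(v, S)` to `(v, S ∪ {v})` (`choose_degree_eq_card`) turns these into the pairs `(v, W)`
with `W` a 4-element set in which `v` is adjacent to all three other vertices. Summing over `W`
instead of `v`, it remains to count the vertices of degree three in each graph on four vertices
(`card_dominating_eq`). Such a vertex is isolated in the complement, so one exists only when the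
edges of the complement lie on three vertices: the complement is a triangle (`G` is a star, one such
vertex), two adjacent edges (one), a single edge (two) or empty (four).
-/

open scoped Classical

/-- The number of edges of `G` induced by a set `W` of vertices. -/
noncomputable def inducedEdgeCount {V : Type*} (G : SimpleGraph V) (W : Finset V) : ℕ :=
  ((W.powersetCard 2).filter fun p => ∃ x ∈ p, ∃ y ∈ p, G.Adj x y).card

/-- The degree of `v` inside `W`: the number of neighbours of `v` belonging to `W`. -/
noncomputable def inducedDeg {V : Type*} (G : SimpleGraph V) (W : Finset V) (v : V) : ℕ :=
  (W.filter fun u => G.Adj v u).card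

/-- `β₀`: the number of 4-element vertex subsets inducing no edge. -/
noncomputable def betaZero {V : Type*} [Fintype V] (G : SimpleGraph V) : ℕ :=
  (((Finset.univ : Finset V).powersetCard 4).filter fun W =>
    inducedEdgeCount G W = 0).card

/-- `β₁`: the number of 4-element vertex subsets inducing exactly one edge. -/
noncomputable def betaOne {V : Type*} [Fintype V] (G : SimpleGraph V) : ℕ :=
  (((Finset.univ : Finset V).powersetCard 4).filter fun W =>
    inducedEdgeCount G W = 1).card

/-- `β_∧`: the number of 4-element vertex subsets inducing two adjacent edges. -/
noncomputable def betaWedge {V : Type*} [Fintype V] (G : SimpleGraph V) : ℕ :=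
  (((Finset.univ : Finset V).powersetCard 4).filter fun W =>
    inducedEdgeCount G W = 2 ∧ ∃ v ∈ W, inducedDeg G W v = 2).card

/-- `β_⊣`: the number of 4-element vertex subsets inducing a star with three edges. -/
noncomputable def betaStar {V : Type*} [Fintype V] (G : SimpleGraph V) : ℕ :=
  (((Finset.univ : Finset V).powersetCard 4).filter fun W =>
    inducedEdgeCount G W = 3 ∧ ∃ v ∈ W, inducedDeg G W v = 3).card

/-- A set of three neighbours of `v` is the same as a 4-element set `W` containing `v` in which
`v` is adjacent to every other vertex. -/
theorem choose_degree_eq_card {V : Type*} [Fintype V] (G : SimpleGraph V) (v : V) :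
    (G.degree v).choose 3 = (((Finset.univ : Finset V).powersetCard 4).filter fun W =>
      v ∈ W ∧ inducedDeg G W v = 3).card := by
  rw [← G.card_neighborFinset_eq_degree, ← Finset.card_powersetCard]
  refine Finset.card_bij' (fun S _ => insert v S) (fun W _ => W.erase v) ?_ ?_ ?_ ?_
  · intro S hS
    obtain ⟨hsub, hcard⟩ := Finset.mem_powersetCard.mp hS
    have hv : v ∉ S := fun h => by simpa using hsub h
    have hfil : (insert v S).filter (fun u => G.Adj v u) = S := by
      ext u
      have := @hsub u
      simp only [SimpleGraph.mem_neighborFinset] at this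
      simp only [Finset.mem_filter, Finset.mem_insert]
      constructor
      · rintro ⟨rfl | h, h'⟩
        · exact absurd h' (G.irrefl)
        · exact h
      · exact fun h => ⟨Or.inr h, this h⟩
    rw [Finset.mem_filter, Finset.mem_powersetCard_univ, inducedDeg, hfil,
      Finset.card_insert_of_notMem hv]
    exact ⟨by omega, Finset.mem_insert_self v S, hcard⟩
  · intro W hW
    rw [Finset.mem_filter, Finset.mem_powersetCard_univ, inducedDeg] at hW
    obtain ⟨h4, hv, h3⟩ := hW
    have hc : (W.erase v).card = 3 := by rw [Finset.card_erase_of_mem hv, h4]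
    have hsub : W.filter (fun u => G.Adj v u) ⊆ W.erase v := by
      intro u hu
      rw [Finset.mem_filter] at hu
      exact Finset.mem_erase.mpr ⟨hu.2.ne', hu.1⟩
    have heq := Finset.eq_of_subset_of_card_le hsub (by omega)
    refine Finset.mem_powersetCard.mpr ⟨?_, hc⟩
    rw [← heq]
    intro u hu
    simpa using (Finset.mem_filter.mp hu).2
  · intro S hS
    have hv : v ∉ S := fun h => by simpa using (Finset.mem_powersetCard.mp hS).1 h
    exact Finset.erase_insert hv
  · intro W hW
    exact Finset.insert_erase (Finset.mem_filter.mp hW).2.1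

/-- Each of the six pairs contributes one exactly when it is an edge: a two-element set `{x, y}`
contains two adjacent vertices if and only if `x` and `y` are adjacent. -/
theorem inducedEdgeCount_four {V : Type*} (G : SimpleGraph V) {a b c d : V}
    (hab : a ≠ b) (hac : a ≠ c) (had : a ≠ d) (hbc : b ≠ c) (hbd : b ≠ d) (hcd : c ≠ d) :
    inducedEdgeCount G {a, b, c, d} =
      (if G.Adj a b then 1 else 0) + (if G.Adj a c then 1 else 0) +
      (if G.Adj a d then 1 else 0) + (if G.Adj b c then 1 else 0) +
      (if G.Adj b d then 1 else 0) + (if G.Adj c d then 1 else 0) := by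
  have hpow : ({a, b, c, d} : Finset V).powersetCard 2 =
      {{a, b}, {a, c}, {a, d}, {b, c}, {b, d}, {c, d}} := by
    ext p
    simp only [Finset.mem_powersetCard, Finset.mem_insert, Finset.mem_singleton]
    constructor
    · rintro ⟨hs, hp⟩
      obtain ⟨x, y, hxy, rfl⟩ := Finset.card_eq_two.mp hp
      have hx := hs (Finset.mem_insert_self x _)
      have hy := hs (Finset.mem_insert_of_mem (Finset.mem_singleton_self y))
      simp only [Finset.mem_insert, Finset.mem_singleton] at hx hy
      rcases hx with rfl | rfl | rfl | rfl <;> rcases hy with rfl | rfl | rfl | rfl <;>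
        simp_all [Finset.pair_comm]
    · rintro (rfl | rfl | rfl | rfl | rfl | rfl) <;>
        refine ⟨by simp [Finset.insert_subset_iff], Finset.card_pair ?_⟩ <;> assumption
  have key : ∀ x y : V, (∃ s ∈ ({x, y} : Finset V), ∃ t ∈ ({x, y} : Finset V), G.Adj s t) ↔
      G.Adj x y := by
    intro x y
    simp [G.adj_comm y x]
  have hne : ∀ {x y z w : V}, x ≠ z → x ≠ w → ({x, y} : Finset V) ≠ {z, w} := by
    intro x y z w h1 h2 h
    have := h ▸ Finset.mem_insert_self x {y}
    simp_all
  have hne' : ∀ {x y z w : V}, y ≠ z → y ≠ w → ({x, y} : Finset V) ≠ {z, w} := by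
    intro x y z w h1 h2
    rw [Finset.pair_comm]
    exact hne h1 h2
  unfold inducedEdgeCount
  rw [hpow, Finset.card_filter]
  rw [Finset.sum_insert, Finset.sum_insert, Finset.sum_insert, Finset.sum_insert,
    Finset.sum_insert, Finset.sum_singleton]
  · simp only [key]
    ring
  all_goals
    simp only [Finset.mem_insert, Finset.mem_singleton, not_or]
    try refine ⟨?_, ?_⟩
    all_goals grind

theorem inducedDeg_four {V : Type*} (G : SimpleGraph V) {a b c d : V}
    (hab : a ≠ b) (hac : a ≠ c) (had : a ≠ d) (hbc : b ≠ c) (hbd : b ≠ d) (hcd : c ≠ d) (v : V) :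
    inducedDeg G {a, b, c, d} v =
      (if G.Adj v a then 1 else 0) + (if G.Adj v b then 1 else 0) +
      (if G.Adj v c then 1 else 0) + (if G.Adj v d then 1 else 0) := by
  unfold inducedDeg
  rw [Finset.card_filter, Finset.sum_insert (by simp [*]), Finset.sum_insert (by simp [*]),
    Finset.sum_insert (by simp [*]), Finset.sum_singleton]
  ring

/-- The number of vertices of degree three in the graph induced on a 4-element set. -/
theorem card_dominating_eq {V : Type*} (G : SimpleGraph V) {W : Finset V} (hW : W.card = 4) :
    (W.filter fun v => inducedDeg G W v = 3).card =
      (if inducedEdgeCount G W = 3 ∧ ∃ v ∈ W, inducedDeg G W v = 3 then 1 else 0) +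
      (if inducedEdgeCount Gᶜ W = 2 ∧ ∃ v ∈ W, inducedDeg Gᶜ W v = 2 then 1 else 0) +
      2 * (if inducedEdgeCount Gᶜ W = 1 then 1 else 0) +
      4 * (if inducedEdgeCount Gᶜ W = 0 then 1 else 0) := by
  obtain ⟨a, b, c, d, hab, hac, had, hbc, hbd, hcd, rfl⟩ := Finset.card_eq_four.mp hW
  rw [Finset.card_filter, Finset.sum_insert (by simp [*]), Finset.sum_insert (by simp [*]),
    Finset.sum_insert (by simp [*]), Finset.sum_singleton]
  simp only [inducedEdgeCount_four _ hab hac had hbc hbd hcd,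
    inducedDeg_four _ hab hac had hbc hbd hcd, SimpleGraph.compl_adj,
    Finset.mem_insert, Finset.mem_singleton, exists_eq_or_imp, exists_eq_left,
    G.adj_comm b a, G.adj_comm c a, G.adj_comm d a, G.adj_comm c b, G.adj_comm d b,
    G.adj_comm d c, SimpleGraph.irrefl, ne_eq, not_true_eq_false, false_and, if_false,
    hab, hac, had, hbc, hbd, hcd, hab.symm, hac.symm, had.symm, hbc.symm, hbd.symm, hcd.symm,
    not_false_eq_true, true_and]
  by_cases h1 : G.Adj a b <;> by_cases h2 : G.Adj a c <;> by_cases h3 : G.Adj a d <;>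
    by_cases h4 : G.Adj b c <;> by_cases h5 : G.Adj b d <;> by_cases h6 : G.Adj c d <;>
    simp [h1, h2, h3, h4, h5, h6]

/-- `Σ_v C(d(v),3) = β_⊣ + β̄_∧ + 2β̄₁ + 4β̄₀`, where barred quantities refer to the
complement graph. -/
theorem degree_sum_identity_two {V : Type*} [Fintype V] (G : SimpleGraph V)
    [DecidableRel G.Adj] :
    ∑ v : V, (G.degree v).choose 3
      = betaStar G + betaWedge Gᶜ + 2 * betaOne Gᶜ + 4 * betaZero Gᶜ := by
  have hswap : ∑ v : V, (((Finset.univ : Finset V).powersetCard 4).filter fun W =>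
        v ∈ W ∧ inducedDeg G W v = 3).card =
      ∑ W ∈ (Finset.univ : Finset V).powersetCard 4,
        (W.filter fun v => inducedDeg G W v = 3).card := by
    have h := Finset.sum_card_bipartiteAbove_eq_sum_card_bipartiteBelow
      (s := (Finset.univ : Finset V)) (t := (Finset.univ : Finset V).powersetCard 4)
      (fun v W => v ∈ W ∧ inducedDeg G W v = 3)
    refine h.trans (Finset.sum_congr rfl fun W _ => ?_)
    congr 1
    ext v
    simp [Finset.bipartiteBelow]
  have hdeg : ∀ v, (G.degree v).choose 3 = (((Finset.univ : Finset V).powersetCard 4).filter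
      fun W => v ∈ W ∧ inducedDeg G W v = 3).card := by
    intro v
    -- The given decidability of adjacency differs from the classical one used in the lemma.
    convert choose_degree_eq_card G v
  rw [Finset.sum_congr rfl fun v _ => hdeg v, hswap,
    Finset.sum_congr rfl fun W hW =>
      card_dominating_eq G (Finset.mem_powersetCard.mp hW).2]
  simp only [betaStar, betaWedge, betaOne, betaZero, Finset.card_filter,
    Finset.sum_add_distrib, Finset.mul_sum]
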